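/- Let L be the abelian group with generators x₁, x₂, x₃ and relations 2x₁ = 3x₂ = (u+1)x₃ for an integer u ≥ 1, and let ω = c − (x₁+x₂+x₃) where c = 2x₁. For integers a, b with 1 ≤ b ≤ 2u+1, one has a·x₁ − b·ω = 0 in L if and only if 3 divides u+1, a = (u−5)/3, and b = u+1. -/

import Mathlib

/-- The abelian group `L(2,3,u+1)` presented by generators `x₁, x₂, x₃`
and relations `2x₁ = 3x₂ = (u+1)x₃`. -/
abbrev Lgrp (u : ℤ) : Type :=
  (ℤ × ℤ × ℤ) ⧸
    AddSubgroup.closure ({((2, -3, 0) : ℤ × ℤ × ℤ), ((0, 3, -(u + 1)) : ℤ × ℤ × ℤ)} :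
      Set (ℤ × ℤ × ℤ))

def Lx1 (u : ℤ) : Lgrp u := QuotientAddGroup.mk ((1, 0, 0) : ℤ × ℤ × ℤ)
def Lx2 (u : ℤ) : Lgrp u := QuotientAddGroup.mk ((0, 1, 0) : ℤ × ℤ × ℤ)
def Lx3 (u : ℤ) : Lgrp u := QuotientAddGroup.mk ((0, 0, 1) : ℤ × ℤ × ℤ)

/-- The canonical element `c = 2x₁`. -/
def Lc (u : ℤ) : Lgrp u := (2 : ℤ) • Lx1 u

/-- The dualizing element `ω = c − (x₁ + x₂ + x₃)`. -/
def Lom (u : ℤ) : Lgrp u := Lc u - (Lx1 u + Lx2 u + Lx3 u)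

/-!
A combination `l₁x₁ + l₂x₂ + l₃x₃` vanishes in `L(2, 3, u + 1)` exactly when
`(l₁, l₂, l₃) = (2 k₁, 3 k₂, (u + 1) k₃)` with `k₁ + k₂ + k₃ = 0`. For the combination
`a x₁ - b ω = (a - b) x₁ + b x₂ + b x₃` this means `b = (u + 1) k` and `3 a = (u - 5) k` for some
integer `k`, and the range `0 < b < 2 (u + 1)` leaves only `k = 1`.
-/

theorem eq_one_of_mul_pos_of_mul_lt_two_mul {m k : ℤ} (hpos : 0 < m * k) (hlt : m * k < 2 * m) :
    k = 1 := by
  have hm : 0 < m := by linarith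
  have hk_pos : 0 < k := pos_of_mul_pos_right hpos hm.le
  have hk_lt : k < 2 := lt_of_mul_lt_mul_left (by linarith) hm.le
  omega

theorem exists_eq_mul_and_iff_of_pos_of_lt_two_mul {m b : ℤ} {P : ℤ → Prop} (hpos : 0 < b)
    (hlt : b < 2 * m) : (∃ k, b = m * k ∧ P k) ↔ b = m ∧ P 1 := by
  constructor
  · rintro ⟨k, rfl, hP⟩
    obtain rfl := eq_one_of_mul_pos_of_mul_lt_two_mul hpos hlt
    exact ⟨mul_one m, hP⟩
  · rintro ⟨rfl, hP⟩
    exact ⟨1, (mul_one b).symm, hP⟩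

theorem mem_closure_weight_relations_iff (p q r x y z : ℤ) :
    (x, y, z) ∈ AddSubgroup.closure ({(p, -q, 0), (0, q, -r)} : Set (ℤ × ℤ × ℤ)) ↔
      ∃ k₁ k₂ k₃ : ℤ, k₁ + k₂ + k₃ = 0 ∧ x = p * k₁ ∧ y = q * k₂ ∧ z = r * k₃ := by
  simp only [AddSubgroup.mem_closure_pair, Prod.smul_mk, Prod.mk_add_mk, Prod.mk.injEq,
    smul_eq_mul]
  constructor
  · rintro ⟨m, n, rfl, rfl, rfl⟩
    exact ⟨m, n - m, -n, by ring, by ring, by ring, by ring⟩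
  · rintro ⟨k₁, k₂, k₃, hk, rfl, rfl, rfl⟩
    obtain rfl : k₂ = -k₁ - k₃ := by linarith
    exact ⟨k₁, -k₃, by ring, by ring, by ring⟩

theorem zsmul_Lx_add_eq_mk (u x y z : ℤ) :
    x • Lx1 u + y • Lx2 u + z • Lx3 u = QuotientAddGroup.mk (x, y, z) := by
  simp [Lx1, Lx2, Lx3, ← QuotientAddGroup.mk_zsmul, ← QuotientAddGroup.mk_add]

theorem zsmul_Lx_add_eq_zero_iff (u x y z : ℤ) :
    x • Lx1 u + y • Lx2 u + z • Lx3 u = 0 ↔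
      ∃ k₁ k₂ k₃ : ℤ, k₁ + k₂ + k₃ = 0 ∧ x = 2 * k₁ ∧ y = 3 * k₂ ∧ z = (u + 1) * k₃ := by
  rw [zsmul_Lx_add_eq_mk, QuotientAddGroup.eq_zero_iff, mem_closure_weight_relations_iff]

theorem zsmul_Lx1_sub_zsmul_Lom (u a b : ℤ) :
    a • Lx1 u - b • Lom u = (a - b) • Lx1 u + b • Lx2 u + b • Lx3 u := by
  rw [Lom, Lc]
  module

theorem stmt4_general (u a b : ℤ) :
    a • Lx1 u - b • Lom u = 0 ↔ ∃ k : ℤ, b = (u + 1) * k ∧ 3 * a = (u - 5) * k := by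
  rw [zsmul_Lx1_sub_zsmul_Lom, zsmul_Lx_add_eq_zero_iff]
  constructor
  · rintro ⟨k₁, k₂, k, hk, ha, hb₂, hb₃⟩
    exact ⟨k, hb₃, by linarith⟩
  · rintro ⟨k, hb, ha⟩
    -- `3 k₂ = b` and `b = 3 a + 6 k` force `k₂ = a + 2 k`.
    exact ⟨-a - 3 * k, a + 2 * k, k, by ring, by linarith, by linarith, hb⟩

theorem stmt4 (u a b : ℤ) (hu : 1 ≤ u) (hb1 : 1 ≤ b) (hb2 : b ≤ 2 * u + 1) :
    a • Lx1 u - b • Lom u = 0 ↔ (3 ∣ (u + 1) ∧ 3 * a = u - 5 ∧ b = u + 1) := by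
  rw [stmt4_general, exists_eq_mul_and_iff_of_pos_of_lt_two_mul (by omega) (by omega)]
  omega
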